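/- (Distinctness of the harmonic highways) Let k > 1 and let i, j satisfy 0 < i < k, 0 < j < k and i ≠ j. Let s^i and s^j be the trace sequences of the ant L^{2k}R started from (C_{k,i}^{0}, (0,0), (0,1)) and from (C_{k,j}^{0}, (0,0), (0,1)) respectively. Then the 4-letter word (i+1)(i−1)(i)(0) occurs as a consecutive factor in the sequence s^i but does not occur as a consecutive factor in the sequence s^j; in particular the k−1 harmonic highways are pairwise distinct. -/

import Mathlib

/-- Cells of the grid `ℤ²`. -/
abbrev Cell : Type := ℤ × ℤ

/-- The four unit directions of `ℤ²` (the state set `Q`). -/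
inductive Dir : Type
  | E | N | W | S
deriving DecidableEq

/-- Rotation by 90° counterclockwise. -/
def Dir.left : Dir → Dir
  | .E => .N | .N => .W | .W => .S | .S => .E

/-- Rotation by 90° clockwise. -/
def Dir.right : Dir → Dir
  | .E => .S | .S => .W | .W => .N | .N => .E

/-- The unit vector of a direction. -/
def Dir.vec : Dir → Cell
  | .E => (1, 0) | .N => (0, 1) | .W => (-1, 0) | .S => (0, -1)

/-- Configurations: a picture `ℤ² → ℤ/nℤ`, a position and a direction. -/
abbrev Config (n : ℕ) : Type := (Cell → ZMod n) × Cell × Dir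

/-- One step of the generalised ant whose rule word over the alphabet `ℤ/nℤ` is
described by `isL : ZMod n → Bool` (`isL a = true` iff the ant turns left on symbol
`a`): the symbol under the ant is increased by `1 (mod n)`, the ant turns left
(counterclockwise) or right (clockwise), and moves one step in its new direction. -/
def antStep (n : ℕ) (isL : ZMod n → Bool) (cfg : Config n) : Config n :=
  let C := cfg.1
  let p := cfg.2.1
  let d' := if isL (C p) then cfg.2.2.left else cfg.2.2.right
  (Function.update C p (C p + 1), p + d'.vec, d')

/-- The rule word `L^{2k}R`: the ant turns left on symbols `0, …, 2k−1` and right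
on symbol `2k` (alphabet `ℤ/(2k+1)ℤ`). -/
def isL2kR (k : ℕ) : ZMod (2 * k + 1) → Bool := fun a => decide (a.val < 2 * k)

/-- The picture `C_{k,i}^{n} : ℤ² → ℤ/(2k+1)ℤ`. -/
def pic (k : ℕ) (i : ZMod (2 * k + 1)) (n : ℕ) : Cell → ZMod (2 * k + 1) := fun q =>
  if q.2 = (n : ℤ) ∧ (q.1 = 1 - (n : ℤ) ∨ q.1 = 2 - (n : ℤ)) then i
  else if q.1 = 1 - (n : ℤ) ∧ q.2 = (n : ℤ) - 1 then i + 1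
  else if q.1 = 2 - (n : ℤ) ∧ q.2 = (n : ℤ) - 1 then i - 1
  else if q.2 = -q.1 - 2 ∧ -(n : ℤ) ≤ q.1 ∧ q.1 ≤ -1 then ((2 * k : ℕ) : ZMod (2 * k + 1))
  else if q.2 = -q.1 + 2 ∧ 2 ≤ q.1 ∧ q.1 ≤ (n : ℤ) + 1 then ((2 * k : ℕ) : ZMod (2 * k + 1)) - 1
  else if q.2 = -q.1 + 1 ∧ 2 ≤ q.1 ∧ q.1 ≤ (n : ℤ) + 1 then ((2 * k : ℕ) : ZMod (2 * k + 1)) - 2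
  else 0

/-- The trace of the ant `L^{2k}R` started from `(C_{k,i}^{0}, (0,0), ↑)`:
`trace k i t` is the symbol read at time `t`. -/
def trace (k : ℕ) (i : ZMod (2 * k + 1)) (t : ℕ) : ZMod (2 * k + 1) :=
  ((antStep (2 * k + 1) (isL2kR k))^[t] (pic k i 0, ((0, 0) : Cell), Dir.N)).1
    ((antStep (2 * k + 1) (isL2kR k))^[t] (pic k i 0, ((0, 0) : Cell), Dir.N)).2.1

/-!
The ant moves by *spins*: on four mutually adjacent cells carrying left-turning symbols it runs in
circles until the first of them reaches the symbol `2k`, where it leaves by a right turn. Three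
spins and three further steps carry the front for `i` at `(x, y)` to the front for `2k - i` at
`(x - 1, y + 1)`, so that the trace is made of half periods of alternating parameters `i` and
`2k - i`. During a spin a `0` is read only in the first turn. Hence the symbol before a `0` is `0`,
`i`, `2k - i` or `2k`, unless the symbol two places before that `0` is `2k`. The word
`(i+1)(i-1)(i)(0)` opens the third spin.
-/

theorem forall_fin_four {P : Fin 4 → Prop} : (∀ r, P r) ↔ P 0 ∧ P 1 ∧ P 2 ∧ P 3 := by
  simp [Fin.forall_fin_succ]

theorem natCast_two_mul_sub {k m : ℕ} (hm : m ≤ 2 * k) :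
    ((2 * k - m : ℕ) : ZMod (2 * k + 1)) = -(m + 1) := by
  have hk : ((2 * k + 1 : ℕ) : ZMod (2 * k + 1)) = 0 := ZMod.natCast_self _
  rw [Nat.cast_sub hm]
  push_cast at hk ⊢
  linear_combination hk

theorem eq_natCast_iff_val_eq {n m : ℕ} [NeZero n] (hm : m < n) (a : ZMod n) :
    a = m ↔ a.val = m := by
  rw [← (ZMod.val_injective n).eq_iff, ZMod.val_natCast_of_lt hm]

/-- `AntRun isL w c c'`: the ant started in `c` reads the symbols `w` one after the other and is
then in `c'`. Symbols are recorded as natural numbers, through their least residues. -/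
inductive AntRun {n : ℕ} (isL : ZMod n → Bool) : List ℕ → Config n → Config n → Prop
  | nil (c : Config n) : AntRun isL [] c c
  | cons {a : ℕ} {w : List ℕ} {c c' : Config n} (read : (c.1 c.2.1).val = a)
      (tail : AntRun isL w (antStep n isL c) c') : AntRun isL (a :: w) c c'

/-- The symbol read at time `t` by the ant started in `c`, as a natural number. -/
def antSymbol {n : ℕ} (isL : ZMod n → Bool) (c : Config n) (t : ℕ) : ℕ :=
  (((antStep n isL)^[t] c).1 ((antStep n isL)^[t] c).2.1).val

namespace AntRun

variable {n : ℕ} {isL : ZMod n → Bool} {u w : List ℕ} {c c' c'' : Config n}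

theorem trans (h : AntRun isL w c c') (h' : AntRun isL u c' c'') : AntRun isL (w ++ u) c c'' := by
  induction h with
  | nil => exact h'
  | cons read _ ih => exact .cons read (ih h')

theorem eq_map_antSymbol (h : AntRun isL w c c') :
    w = (List.range w.length).map (antSymbol isL c) := by
  induction h with
  | nil => rfl
  | cons read _ ih =>
    rw [List.length_cons, List.range_succ_eq_map, List.map_cons, List.map_map]
    exact congrArg₂ List.cons read.symm ih

theorem infix_iff (h : AntRun isL w c c') : u <:+: w ↔
    ∃ t, t + u.length ≤ w.length ∧ ∀ r : Fin u.length, antSymbol isL c (t + r) = u.get r := by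
  rw [List.infix_iff_getElem?]
  refine exists_congr fun t ↦ ?_
  rw [Nat.add_comm, Fin.forall_iff]
  refine and_congr_right fun ht ↦ forall₂_congr fun r hr ↦ ?_
  rw [h.eq_map_antSymbol, List.getElem?_map, List.getElem?_range (by omega), Option.map_some,
    Option.some_inj, Nat.add_comm, List.get_eq_getElem]

theorem singleton (isL : ZMod n → Bool) (C : Cell → ZMod n) (p : Cell) (d : Dir) :
    AntRun isL [(C p).val] (C, p, d)
      (C + Pi.single p 1, p + (if isL (C p) then d.left else d.right).vec,
        if isL (C p) then d.left else d.right) := by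
  have hupdate : Function.update C p (C p + 1) = C + Pi.single p 1 := by
    ext q
    by_cases h : q = p <;> simp [h]
  refine .cons rfl ?_
  rw [antStep, hupdate]
  exact .nil _

end AntRun

section Loops

variable (n : ℕ) (p : Cell) (d : Dir)

/-- The four cells visited, in this order, by an ant that turns left four times from `(p, d)`. -/
def loopCell : Fin 4 → Cell :=
  ![p, p + d.left.vec, p + d.left.vec - d.vec, p - d.vec]

/-- The number of visits that four successive left turns from `(p, d)` pay to each cell. -/
def loopVisits : Cell → ZMod n :=
  ∑ r, Pi.single (loopCell p d r) 1

/-- The word read by an ant that runs `m` times around four cells on which it turns left and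
whose symbols are initially `a 0`, `a 1`, `a 2`, `a 3`. -/
def loopWord (a : Fin 4 → ℕ) : ℕ → List ℕ
  | 0 => []
  | m + 1 => List.ofFn a ++ loopWord (a + 1) m

theorem loopCell_injective : Function.Injective (loopCell p d) := by
  intro r s
  fin_cases r <;> fin_cases s <;> cases d <;>
    simp [loopCell, Dir.left, Dir.vec, Prod.ext_iff, add_assoc, sub_eq_add_neg]

theorem loopVisits_loopCell (r : Fin 4) : loopVisits n p d (loopCell p d r) = 1 := by
  simp [loopVisits, Pi.single_apply, (loopCell_injective p d).eq_iff]

theorem loopCell_north (x y : ℤ) :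
    loopCell (x, y) .N = ![(x, y), (x - 1, y), (x - 1, y - 1), (x, y - 1)] := by
  simp [loopCell, Dir.left, Dir.vec, sub_eq_add_neg]

theorem loopCell_east (x y : ℤ) :
    loopCell (x, y) .E = ![(x, y), (x, y + 1), (x - 1, y + 1), (x - 1, y)] := by
  simp [loopCell, Dir.left, Dir.vec, sub_eq_add_neg]

theorem loopCell_south (x y : ℤ) :
    loopCell (x, y) .S = ![(x, y), (x + 1, y), (x + 1, y + 1), (x, y + 1)] := by
  simp [loopCell, Dir.left, Dir.vec, sub_eq_add_neg]

theorem loopVisits_north (x y u v : ℤ) : loopVisits n (x, y) .N (u, v) =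
    if (u = x - 1 ∨ u = x) ∧ (v = y - 1 ∨ v = y) then 1 else 0 := by
  simp only [loopVisits, loopCell_north, Fin.sum_univ_four, Matrix.cons_val, Pi.add_apply,
    Pi.single_apply, Prod.mk.injEq]
  grind

theorem loopVisits_east (x y u v : ℤ) : loopVisits n (x, y) .E (u, v) =
    if (u = x - 1 ∨ u = x) ∧ (v = y ∨ v = y + 1) then 1 else 0 := by
  simp only [loopVisits, loopCell_east, Fin.sum_univ_four, Matrix.cons_val, Pi.add_apply,
    Pi.single_apply, Prod.mk.injEq]
  grind

theorem loopVisits_south (x y u v : ℤ) : loopVisits n (x, y) .S (u, v) =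
    if (u = x ∨ u = x + 1) ∧ (v = y ∨ v = y + 1) then 1 else 0 := by
  simp only [loopVisits, loopCell_south, Fin.sum_univ_four, Matrix.cons_val, Pi.add_apply,
    Pi.single_apply, Prod.mk.injEq]
  grind

theorem zero_notMem_loopWord_add_one (a : Fin 4 → ℕ) (m : ℕ) : 0 ∉ loopWord (a + 1) m := by
  induction m generalizing a with
  | zero => simp [loopWord]
  | succ m ih => simp [loopWord, ih]

end Loops

namespace AntRun

variable {k : ℕ} {C : Cell → ZMod (2 * k + 1)} {p q : Cell} {d : Dir}

theorem left {a : ℕ} (hC : C p = a) (ha : a < 2 * k) (hq : p + d.left.vec = q) :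
    AntRun (isL2kR k) [a] (C, p, d) (C + Pi.single p 1, q, d.left) := by
  have hval : (C p).val = a := by rw [hC, ZMod.val_natCast_of_lt (by omega)]
  simpa [isL2kR, hval, ha, hq] using singleton (isL2kR k) C p d

theorem right (hC : C p = -1) (hq : p + d.right.vec = q) :
    AntRun (isL2kR k) [2 * k] (C, p, d) (C + Pi.single p 1, q, d.right) := by
  have hval : (C p).val = 2 * k := by rw [hC, ZMod.val_neg_one]
  simpa only [isL2kR, hval, lt_irrefl, decide_false, Bool.false_eq_true, if_false, hq]
    using singleton (isL2kR k) C p d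

theorem loop {a : Fin 4 → ℕ} (hC : ∀ r, C (loopCell p d r) = a r) (ha : ∀ r, a r < 2 * k) :
    AntRun (isL2kR k) (List.ofFn a) (C, p, d) (C + loopVisits _ p d, p, d) := by
  have hinj {r s} : loopCell p d r = loopCell p d s ↔ r = s := (loopCell_injective p d).eq_iff
  have hturn : d.left.left.left.left = d := by cases d <;> rfl
  have hcell₂ : loopCell p d 1 + d.left.left.vec = loopCell p d 2 := by
    cases d <;> simp [loopCell, Dir.left, Dir.vec, sub_eq_add_neg]
  have hcell₃ : loopCell p d 2 + d.left.left.left.vec = loopCell p d 3 := by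
    cases d <;> simp [loopCell, Dir.left, Dir.vec, sub_eq_add_neg, add_assoc]
  have hcell₀ : loopCell p d 3 + d.left.left.left.left.vec = loopCell p d 0 := by
    simp [hturn, loopCell]
  have hrun := (((left (hC 0) (ha 0) rfl).trans
    (left (p := loopCell p d 1) (by simp [hC, hinj]) (ha 1) hcell₂)).trans
    (left (by simp [hC, hinj]) (ha 2) hcell₃)).trans
    (left (by simp [hC, hinj]) (ha 3) hcell₀)
  have hvisits : C + loopVisits _ p d =
      C + Pi.single (loopCell p d 0) 1 + Pi.single (loopCell p d 1) 1 +
        Pi.single (loopCell p d 2) 1 + Pi.single (loopCell p d 3) 1 := by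
    simp only [loopVisits, Fin.sum_univ_four, add_assoc]
  rw [hturn] at hrun
  rw [hvisits]
  simpa only [List.ofFn_succ] using! hrun

theorem loops {a : Fin 4 → ℕ} {m : ℕ} (hC : ∀ r, C (loopCell p d r) = a r)
    (ha : ∀ r, a r + m ≤ 2 * k) :
    AntRun (isL2kR k) (loopWord a m) (C, p, d) (C + m • loopVisits _ p d, p, d) := by
  induction m generalizing C a with
  | zero => simpa using! AntRun.nil _
  | succ m ih =>
    have hloop := loop hC fun r ↦ (by have := ha r; omega : a r < 2 * k)
    have hstep (r : Fin 4) : (a + 1) r + m ≤ 2 * k := by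
      have := ha r
      rw [Pi.add_apply, Pi.one_apply]
      omega
    have hloops := ih (C := C + loopVisits _ p d) (fun r ↦ by simp [hC, loopVisits_loopCell]) hstep
    rw [succ_nsmul', ← add_assoc]
    exact hloop.trans hloops

end AntRun

/-- The word read by the ant `L^{2k}R` that runs around four cells, whose symbols are initially
`a 0`, `a 1`, `a 2`, `a 3`, until it turns right on the first of them. -/
def spinWord (k : ℕ) (a : Fin 4 → ℕ) : List ℕ :=
  loopWord a (2 * k - a 0) ++ [2 * k]

/-- The number of visits that reading a `spinWord` from the state `(p, d)` pays to each cell, when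
the symbol of `p` is initially `s`. -/
def spinVisits (k s : ℕ) (p : Cell) (d : Dir) : Cell → ZMod (2 * k + 1) :=
  (2 * k - s) • loopVisits _ p d + Pi.single p 1

theorem spinVisits_apply {k s : ℕ} (hs : s ≤ 2 * k) (p : Cell) (d : Dir) (q : Cell) :
    spinVisits k s p d q =
      -((s : ZMod (2 * k + 1)) + 1) * loopVisits _ p d q + if q = p then 1 else 0 := by
  rw [spinVisits, Pi.add_apply, Pi.smul_apply, nsmul_eq_mul, natCast_two_mul_sub hs,
    Pi.single_apply]

theorem AntRun.spin {k : ℕ} {C : Cell → ZMod (2 * k + 1)} {p q : Cell} {d : Dir} {a : Fin 4 → ℕ}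
    (hC : ∀ r, C (loopCell p d r) = a r) (ha : ∀ r, a r ≤ a 0) (ha₀ : a 0 ≤ 2 * k)
    (hq : p + d.right.vec = q) :
    AntRun (isL2kR k) (spinWord k a) (C, p, d) (C + spinVisits k (a 0) p d, q, d.right) := by
  have hpivot : (C + (2 * k - a 0) • loopVisits (2 * k + 1) p d) p = -1 := by
    have hCp : C p = a 0 := hC 0
    have hvisit : loopVisits (2 * k + 1) p d p = 1 := loopVisits_loopCell _ p d 0
    rw [Pi.add_apply, Pi.smul_apply, hCp, hvisit, nsmul_one, natCast_two_mul_sub ha₀]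
    ring
  rw [spinVisits, ← add_assoc]
  exact (loops hC fun r ↦ by have := ha r; omega).trans (right hpivot hq)

/-- The word of the three spins that begin a half period of parameter `i`. -/
def spinsWord (k i : ℕ) : List ℕ :=
  spinWord k ![0, 0, 0, 0] ++ spinWord k ![i, 0, 0, 0] ++ spinWord k ![i + 1, i - 1, i, 0]

/-- The number of visits paid to each cell while `spinsWord k i` is read from the position
`(x, y)`. -/
def spinsVisits (k i : ℕ) (x y : ℤ) : Cell → ZMod (2 * k + 1) :=
  spinVisits k 0 (x, y) .N + spinVisits k i (x + 1, y) .E + spinVisits k (i + 1) (x + 1, y - 1) .S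

theorem spinsVisits_apply {k i : ℕ} (hik : i < 2 * k) (x y u v : ℤ) :
    spinsVisits k i x y (u, v) =
      (if (u = x - 1 ∨ u = x) ∧ (v = y - 1 ∨ v = y) then -1 else 0) +
      (if u = x ∧ v = y then 1 else 0) +
      (if (u = x ∨ u = x + 1) ∧ (v = y ∨ v = y + 1) then -((i : ZMod (2 * k + 1)) + 1) else 0) +
      (if u = x + 1 ∧ v = y then 1 else 0) +
      (if (u = x + 1 ∨ u = x + 2) ∧ (v = y - 1 ∨ v = y) then
        -((i : ZMod (2 * k + 1)) + 2) else 0) +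
      (if u = x + 1 ∧ v = y - 1 then 1 else 0) := by
  simp only [spinsVisits, Pi.add_apply, spinVisits_apply, loopVisits_north, loopVisits_east,
    loopVisits_south, Nat.zero_le, hik.le, Nat.succ_le_of_lt hik, Prod.mk.injEq, Nat.cast_zero,
    Nat.cast_add, Nat.cast_one, mul_ite, mul_one, mul_zero, zero_add, add_sub_cancel_right,
    sub_add_cancel]
  grind

/-- The number of visits paid to each cell while `halfPeriodWord k i` is read from the position
`(x, y)`. -/
def halfPeriodVisits (k i : ℕ) (x y : ℤ) : Cell → ZMod (2 * k + 1) :=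
  spinsVisits k i x y + Pi.single (x, y - 1) 1 + Pi.single (x, y) 1 + Pi.single (x - 1, y) 1

/-- The word read by the ant during a half period of the highway of parameter `i`. -/
def halfPeriodWord (k i : ℕ) : List ℕ :=
  spinsWord k i ++ [2 * k] ++ [2 * k - i] ++ [2 * k]

/-- The part of the picture that matters to an ant that reaches `(x, y)` facing north and is about
to run through a half period of parameter `i`. The highway drifts towards `(-1, 1)`, and the
half-plane on that side is blank; the cells behind that no longer matter are left free. -/
structure IsFront (k i : ℕ) (x y : ℤ) (C : Cell → ZMod (2 * k + 1)) : Prop where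
  ahead : ∀ u v : ℤ, y - x ≤ v - u → C (u, v) = 0
  south : C (x, y - 1) = 0
  east₁ : C (x + 1, y) = i
  east₂ : C (x + 2, y) = i
  southeast₁ : C (x + 1, y - 1) = i + 1
  southeast₂ : C (x + 2, y - 1) = i - 1

theorem isFront_pic (k i : ℕ) : IsFront k i 0 0 (pic k i 0) where
  ahead u v h := by
    simp only [pic, Nat.cast_zero]
    grind
  south := by simp [pic]
  east₁ := by simp [pic]
  east₂ := by simp [pic]
  southeast₁ := by simp [pic]
  southeast₂ := by simp [pic]

namespace IsFront

variable {k i : ℕ} {x y : ℤ} {C : Cell → ZMod (2 * k + 1)}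

theorem antRun_spinsWord (h : IsFront k i x y C) (hi : 0 < i) (hik : i < 2 * k) :
    AntRun (isL2kR k) (spinsWord k i) (C, (x, y), .N)
      (C + spinsVisits k i x y, (x, y - 1), .W) := by
  obtain ⟨hahead, hsouth, heast₁, heast₂, hsoutheast₁, hsoutheast₂⟩ := h
  have hspin₁ : AntRun (isL2kR k) (spinWord k ![0, 0, 0, 0]) (C, (x, y), .N)
      (C + spinVisits k 0 (x, y) .N, (x + 1, y), .E) := by
    refine .spin ?_ ?_ ?_ ?_
    · simp only [forall_fin_four, loopCell_north, Matrix.cons_val]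
      grind
    · simp [forall_fin_four]
    · simp
    · simp [Dir.right, Dir.vec]
  have hspin₂ : AntRun (isL2kR k) (spinWord k ![i, 0, 0, 0])
      (C + spinVisits k 0 (x, y) .N, (x + 1, y), .E)
      (C + spinVisits k 0 (x, y) .N + spinVisits k i (x + 1, y) .E, (x + 1, y - 1), .S) := by
    refine .spin ?_ ?_ ?_ ?_
    · simp only [forall_fin_four, loopCell_east, Matrix.cons_val, Pi.add_apply, spinVisits_apply,
        loopVisits_north, Prod.mk.injEq, Nat.zero_le]
      grind
    · simp [forall_fin_four]
    · simpa using hik.le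
    · simp [Dir.right, Dir.vec, sub_eq_add_neg]
  have hspin₃ : AntRun (isL2kR k) (spinWord k ![i + 1, i - 1, i, 0])
      (C + spinVisits k 0 (x, y) .N + spinVisits k i (x + 1, y) .E, (x + 1, y - 1), .S)
      (C + spinVisits k 0 (x, y) .N + spinVisits k i (x + 1, y) .E +
        spinVisits k (i + 1) (x + 1, y - 1) .S, (x, y - 1), .W) := by
    refine .spin ?_ ?_ ?_ ?_
    · simp only [forall_fin_four, loopCell_south, Matrix.cons_val, Pi.add_apply, spinVisits_apply,
        loopVisits_north, loopVisits_east, Prod.mk.injEq, Nat.zero_le, hik.le, Nat.cast_pred hi]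
      grind
    · simp only [forall_fin_four, Matrix.cons_val]
      omega
    · simpa using hik
    · simp [Dir.right, Dir.vec]
  rw [spinsVisits, ← add_assoc, ← add_assoc]
  exact (hspin₁.trans hspin₂).trans hspin₃

theorem antRun_halfPeriodWord (h : IsFront k i x y C) (hi : 0 < i) (hik : i < 2 * k) :
    AntRun (isL2kR k) (halfPeriodWord k i) (C, (x, y), .N)
      (C + halfPeriodVisits k i x y, (x - 1, y + 1), .N) := by
  have hspins := h.antRun_spinsWord hi hik
  obtain ⟨hahead, hsouth, -, -, -, -⟩ := h
  have hsouth' : (C + spinsVisits k i x y) (x, y - 1) = -1 := by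
    simp only [Pi.add_apply, spinsVisits_apply hik]
    grind
  have hcenter : (C + spinsVisits k i x y) (x, y) = (2 * k - i : ℕ) := by
    simp only [Pi.add_apply, spinsVisits_apply hik, natCast_two_mul_sub hik.le]
    grind
  have hwest : (C + spinsVisits k i x y) (x - 1, y) = -1 := by
    simp only [Pi.add_apply, spinsVisits_apply hik]
    grind
  rw [halfPeriodVisits, ← add_assoc, ← add_assoc, ← add_assoc]
  refine ((hspins.trans (.right hsouth' (q := (x, y)) ?_)).trans
    (.left (q := (x - 1, y)) ?_ ?_ ?_)).trans (.right ?_ ?_)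
  · simp [Dir.right, Dir.vec]
  · simp [hcenter]
  · omega
  · simp [Dir.right, Dir.left, Dir.vec, sub_eq_add_neg]
  · simp [hwest]
  · simp [Dir.right, Dir.left, Dir.vec]

theorem add_halfPeriodVisits (h : IsFront k i x y C) (hik : i < 2 * k) :
    IsFront k (2 * k - i) (x - 1) (y + 1) (C + halfPeriodVisits k i x y) := by
  cases h
  constructor <;>
    simp only [Pi.add_apply, halfPeriodVisits, spinsVisits_apply hik, Pi.single_apply,
      Prod.mk.injEq, natCast_two_mul_sub hik.le] <;>
    grind

end IsFront

/-- The word read during the first `n` half periods of the highway of parameter `i`. The parameter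
alternates between `i` and `2 * k - i`. -/
def highwayWord (k : ℕ) : ℕ → ℕ → List ℕ
  | _, 0 => []
  | i, n + 1 => halfPeriodWord k i ++ highwayWord k (2 * k - i) n

theorem le_length_highwayWord (k i n : ℕ) : n ≤ (highwayWord k i n).length := by
  induction n generalizing i with
  | zero => exact Nat.zero_le _
  | succ n ih =>
    have htail := ih (2 * k - i)
    simp only [highwayWord, halfPeriodWord, List.length_append, List.length_singleton]
    omega

theorem IsFront.exists_antRun_highwayWord {k i : ℕ} {x y : ℤ} {C : Cell → ZMod (2 * k + 1)}
    (h : IsFront k i x y C) (hi : 0 < i) (hik : i < 2 * k) (n : ℕ) :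
    ∃ c, AntRun (isL2kR k) (highwayWord k i n) (C, (x, y), .N) c := by
  induction n generalizing i x y C with
  | zero => exact ⟨_, .nil _⟩
  | succ n ih =>
    obtain ⟨c, hc⟩ := ih (h.add_halfPeriodVisits hik) (by omega) (by omega)
    exact ⟨c, (h.antRun_halfPeriodWord hi hik).trans hc⟩

theorem exists_trace_eq_iff {k i : ℕ} (hi : 0 < i) (hik : i < 2 * k) (u : List ℕ) :
    (∃ t, ∀ r : Fin u.length, (trace k i (t + r)).val = u.get r) ↔
      ∃ n, u <:+: highwayWord k i n := by
  have hrun (n : ℕ) := (isFront_pic k i).exists_antRun_highwayWord hi hik n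
  constructor
  · rintro ⟨t, ht⟩
    obtain ⟨c, hc⟩ := hrun (t + u.length)
    exact ⟨_, hc.infix_iff.mpr ⟨t, le_length_highwayWord k i _, ht⟩⟩
  · rintro ⟨n, hn⟩
    obtain ⟨c, hc⟩ := hrun n
    obtain ⟨t, -, ht⟩ := hc.infix_iff.mp hn
    exact ⟨t, ht⟩

section Factors

variable {k a b : ℕ} {l : List ℕ}

theorem infix_of_infix_append_append_cons {u w : List ℕ} {x : ℕ} (hw : 0 ∉ w) (hx : x ≠ 0)
    (h : [a, b, 0] <:+: u ++ (w ++ x :: l)) :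
    [a, b, 0] <:+: u ∨ b = x ∨ [a, b, 0] <:+: x :: l := by
  induction u with
  | nil =>
    induction w with
    | nil => exact .inr (.inr h)
    | cons c w ih =>
      rw [List.mem_cons, not_or] at hw
      rcases List.infix_cons_iff.mp h with hprefix | hinfix
      · rcases w with _ | ⟨d, _ | ⟨e, w⟩⟩ <;> simp_all [List.cons_prefix_cons]
      · exact ih hw.2 hinfix
  | cons c u ih =>
    rcases List.infix_cons_iff.mp h with hprefix | hinfix
    · rcases u with _ | ⟨d, _ | ⟨e, u⟩⟩ <;> rcases w with _ | ⟨f, _ | ⟨g, w⟩⟩ <;>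
        simp_all [List.cons_prefix_cons, List.infix_cons_iff]
    · exact (ih hinfix).imp_left List.infix_cons

/- In the next lemmas the leading `2 * k` is the symbol read just before the word considered: it
accounts for the factors that straddle the boundary between two consecutive words. -/

theorem infix_of_infix_spinWord_append {s₀ s₁ s₂ s₃ : ℕ} (hk : 0 < k)
    (h : [a, b, 0] <:+: 2 * k :: (spinWord k ![s₀, s₁, s₂, s₃] ++ l)) :
    a = 2 * k ∨ b = 2 * k ∨ (b = s₁ ∧ s₂ = 0) ∨ (b = s₂ ∧ s₃ = 0) ∨ [a, b, 0] <:+: 2 * k :: l := by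
  rcases hm : 2 * k - s₀ with _ | m
  · have hspin : spinWord k ![s₀, s₁, s₂, s₃] = [2 * k] := by simp [spinWord, hm, loopWord]
    rw [hspin, List.singleton_append, List.infix_cons_iff, List.cons_prefix_cons] at h
    tauto
  · have hspin : 2 * k :: (spinWord k ![s₀, s₁, s₂, s₃] ++ l) =
        [2 * k, s₀, s₁, s₂, s₃] ++ (loopWord (![s₀, s₁, s₂, s₃] + 1) m ++ 2 * k :: l) := by
      simp [spinWord, hm, loopWord]
    rw [hspin] at h
    rcases infix_of_infix_append_append_cons (zero_notMem_loopWord_add_one _ m) (by omega) h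
      with hstart | hb | htail
    · simp only [List.infix_cons_iff, List.cons_prefix_cons, List.infix_nil] at hstart
      grind
    · exact .inr (.inl hb)
    · exact .inr (.inr (.inr (.inr htail)))

theorem infix_of_infix_halfPeriodWord_append {i : ℕ} (hi : 0 < i) (hik : i < 2 * k)
    (h : [a, b, 0] <:+: 2 * k :: (halfPeriodWord k i ++ l)) :
    a = 2 * k ∨ b = 2 * k ∨ b = 0 ∨ b = i ∨ [a, b, 0] <:+: 2 * k :: l := by
  have hk : 0 < k := by omega
  by_contra! hne
  obtain ⟨ha, hb, hb₀, hbi, hl⟩ := hne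
  simp only [halfPeriodWord, spinsWord, List.append_assoc] at h
  have hspin₁ := infix_of_infix_spinWord_append hk h
  simp only [ha, hb, hb₀, false_and, false_or] at hspin₁
  have hspin₂ := infix_of_infix_spinWord_append hk hspin₁
  simp only [ha, hb, hb₀, false_and, false_or] at hspin₂
  have hspin₃ := infix_of_infix_spinWord_append hk hspin₂
  simp only [ha, hb, hbi, hi.ne', and_false, false_and, false_or] at hspin₃
  have hturns : 0 ∉ [2 * k, 2 * k, 2 * k - i] := by
    simp only [List.mem_cons, List.not_mem_nil, or_false]
    omega
  have hend := infix_of_infix_append_append_cons (u := []) (l := l) hturns (by omega) hspin₃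
  simp only [hb, hl, List.infix_nil, List.cons_ne_nil, or_self] at hend

theorem infix_two_mul_cons_highwayWord {i n : ℕ} (hi : 0 < i) (hik : i < 2 * k)
    (h : [a, b, 0] <:+: 2 * k :: highwayWord k i n) :
    a = 2 * k ∨ b = 2 * k ∨ b = 0 ∨ b = i ∨ b = 2 * k - i := by
  induction n generalizing i with
  | zero => simp [highwayWord, List.infix_cons_iff, List.cons_prefix_cons] at h
  | succ n ih =>
    have htail := ih (i := 2 * k - i) (by omega) (by omega)
    rw [Nat.sub_sub_self hik.le] at htail
    have := infix_of_infix_halfPeriodWord_append hi hik h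
    tauto

end Factors

theorem infix_highwayWord_one {k i : ℕ} (hik : i + 1 < 2 * k) :
    [i + 1, i - 1, i, 0] <:+: highwayWord k i 1 := by
  obtain ⟨m, hm⟩ : ∃ m, 2 * k - (i + 1) = m + 1 := ⟨2 * k - (i + 1) - 1, by omega⟩
  refine ⟨spinWord k ![0, 0, 0, 0] ++ spinWord k ![i, 0, 0, 0],
    loopWord (![i + 1, i - 1, i, 0] + 1) m ++ [2 * k, 2 * k, 2 * k - i, 2 * k], ?_⟩
  simp [highwayWord, halfPeriodWord, spinsWord, spinWord, hm, loopWord]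

theorem exists_harmonic_factor_iff {k i j : ℕ} (hi : 0 < i) (hik : i < 2 * k) (hj : 0 < j)
    (hjk : j < 2 * k) :
    (∃ t, trace k j t = (i : ZMod (2 * k + 1)) + 1 ∧
      trace k j (t + 1) = (i : ZMod (2 * k + 1)) - 1 ∧
      trace k j (t + 2) = i ∧ trace k j (t + 3) = 0) ↔
    ∃ n, [i + 1, i - 1, i, 0] <:+: highwayWord k j n := by
  have hsucc : (i : ZMod (2 * k + 1)) + 1 = (i + 1 : ℕ) := (Nat.cast_succ i).symm
  have hpred : (i : ZMod (2 * k + 1)) - 1 = (i - 1 : ℕ) := (Nat.cast_pred hi).symm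
  rw [← exists_trace_eq_iff hj hjk, hsucc, hpred]
  refine exists_congr fun t ↦ ?_
  rw [eq_natCast_iff_val_eq (by omega), eq_natCast_iff_val_eq (by omega),
    eq_natCast_iff_val_eq (by omega), ← ZMod.val_eq_zero]
  exact (forall_fin_four (P := fun r ↦
    (trace k j (t + r)).val = [i + 1, i - 1, i, 0].get r)).symm

theorem l2kr_harmonic_highways_distinct_general (k i j : ℕ) (hi : 0 < i) (hik : i + 1 < 2 * k)
    (hj : 0 < j) (hjk : j < 2 * k) (hij : i ≠ j) (hsum : i + j ≠ 2 * k) :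
    (∃ t : ℕ,
      trace k (i : ZMod (2 * k + 1)) t = (i : ZMod (2 * k + 1)) + 1 ∧
      trace k (i : ZMod (2 * k + 1)) (t + 1) = (i : ZMod (2 * k + 1)) - 1 ∧
      trace k (i : ZMod (2 * k + 1)) (t + 2) = (i : ZMod (2 * k + 1)) ∧
      trace k (i : ZMod (2 * k + 1)) (t + 3) = 0) ∧
    ¬ (∃ t : ℕ,
      trace k (j : ZMod (2 * k + 1)) t = (i : ZMod (2 * k + 1)) + 1 ∧
      trace k (j : ZMod (2 * k + 1)) (t + 1) = (i : ZMod (2 * k + 1)) - 1 ∧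
      trace k (j : ZMod (2 * k + 1)) (t + 2) = (i : ZMod (2 * k + 1)) ∧
      trace k (j : ZMod (2 * k + 1)) (t + 3) = 0) := by
  have hik' : i < 2 * k := by omega
  rw [exists_harmonic_factor_iff hi hik' hi hik', exists_harmonic_factor_iff hi hik' hj hjk]
  refine ⟨⟨1, infix_highwayWord_one hik⟩, fun ⟨n, hn⟩ ↦ ?_⟩
  have hfactor : [i - 1, i, 0] <:+: 2 * k :: highwayWord k j n :=
    ((List.suffix_cons _ _).isInfix.trans hn).trans (List.suffix_cons _ _).isInfix
  have := infix_two_mul_cons_highwayWord hj hjk hfactor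
  omega

/-- distinctness of the harmonic highways. For `k > 1` and
`0 < i, j < k` with `i ≠ j`, the 4-letter word `(i+1)(i−1)(i)(0)` occurs as a
consecutive factor of the trace of the highway started from `(C_{k,i}^{0},(0,0),↑)`
but not of the one started from `(C_{k,j}^{0},(0,0),↑)`; in particular the `k−1`
harmonic highways are pairwise distinct. -/
theorem l2kr_harmonic_highways_distinct (k i j : ℕ) (hk : 1 < k)
    (hi0 : 0 < i) (hik : i < k) (hj0 : 0 < j) (hjk : j < k) (hij : i ≠ j) :
    (∃ t : ℕ,
      trace k (i : ZMod (2 * k + 1)) t = (i : ZMod (2 * k + 1)) + 1 ∧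
      trace k (i : ZMod (2 * k + 1)) (t + 1) = (i : ZMod (2 * k + 1)) - 1 ∧
      trace k (i : ZMod (2 * k + 1)) (t + 2) = (i : ZMod (2 * k + 1)) ∧
      trace k (i : ZMod (2 * k + 1)) (t + 3) = 0) ∧
    ¬ (∃ t : ℕ,
      trace k (j : ZMod (2 * k + 1)) t = (i : ZMod (2 * k + 1)) + 1 ∧
      trace k (j : ZMod (2 * k + 1)) (t + 1) = (i : ZMod (2 * k + 1)) - 1 ∧
      trace k (j : ZMod (2 * k + 1)) (t + 2) = (i : ZMod (2 * k + 1)) ∧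
      trace k (j : ZMod (2 * k + 1)) (t + 3) = 0) := by
  exact l2kr_harmonic_highways_distinct_general k i j hi0 (by omega) hj0 (by omega) hij (by omega)
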